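/- Proposition 6. Let M, N be positive integers and let μ be an integer with 1 ≤ μ ≤ M+N−1. Set b(z) = q(1−z)/(1−q²z) and c(z) = (1−q²)/(1−q²z). For μ = 1 define A₁ = (w₁' − q w₀), B₁ = −b(w₀'/w₀)(q w₁' − w₀), C₁ = −c(w₀'/w₀)(w₁' − q w₀'). For 2 ≤ μ ≤ M define A_μ = Π_{j=0}^{μ−2} (q w_{j+1} − w_j')(w_{j+1}' − q w_j) · (w_μ' − q w_{μ−1}), B_μ = −b(w₀'/w₀)(q w₁ − w₀)(w₁' − q w₀') · Π_{j=1}^{μ−2} (q w_{j+1} − w_j')(w_{j+1}' − q w_j) · (q w_μ' − w_{μ−1}'), C_μ = −c(w₀'/w₀)(q w₁ − w₀)(w₁' − q w₀') · Π_{j=1}^{μ−2} (q w_{j+1} − w_j')(w_{j+1}' − q w_j) · (w_μ' − q w_{μ−1}). For M+1 ≤ μ ≤ M+N−1 define A_μ = Π_{j=0}^{M−1} (q w_{j+1} − w_j')(w_{j+1}' − q w_j) · Π_{j=M}^{μ−2} (w_{j+1} − q w_j')(q w_{j+1}' − w_j) · (q w_μ' − w_{μ−1}), B_μ = b(w₀'/w₀)(q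 w₁ − w₀)(w₁' − q w₀') · Π_{j=1}^{M−1} (q w_{j+1} − w_j')(w_{j+1}' − q w_j) · Π_{j=M}^{μ−2} (w_{j+1} − q w_j')(q w_{j+1}' − w_j) · (w_μ' − q w_{μ−1}'), C_μ = −c(w₀'/w₀)(q w₁ − w₀)(w₁' − q w₀') · Π_{j=1}^{M−1} (q w_{j+1} − w_j')(w_{j+1}' − q w_j) · Π_{j=M}^{μ−2} (w_{j+1} − q w_j')(q w_{j+1}' − w_j) · (q w_μ' − w_{μ−1}). Then A_μ + B_μ + C_μ ∼ 0 with respect to the pairs (w₁, w₁'), …, (w_{μ−1}, w_{μ−1}') carrying the U_q(ŝl(M|N)) exchange factors; here w₀, w₀' and w_μ' are further free variables, and for μ = 1 the weak equality is the plain identity A₁ + B₁ + C₁ = 0. -/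

import Mathlib

/-- Bosonic exchange factor `H^b(u,v) = -(q²v - u)/(q²u - v)`. -/
noncomputable def Hb (q u v : ℂ) : ℂ := -(q ^ 2 * v - u) / (q ^ 2 * u - v)

/-- Fermionic exchange factor `H^f(u,v) = -(q²u - v)/(q²v - u)`. -/
noncomputable def Hf (q u v : ℂ) : ℂ := -(q ^ 2 * u - v) / (q ^ 2 * v - u)

/-- Exchange factor assignment for `U_q(sl^(M|N))`: bosonic for `j < M`,
the constant `-1` for `j = M`, fermionic for `j > M`. -/
noncomputable def Hex (M : ℕ) (q : ℂ) (j : ℕ) : ℂ → ℂ → ℂ :=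
  if j < M then Hb q else if j = M then fun _ _ => -1 else Hf q

/-- Interchange `w_j` and `w_j'` for every `j ∈ σ`. -/
def swapOn (σ : Finset ℕ) (w w' : ℕ → ℂ) : ℕ → ℂ := fun j => if j ∈ σ then w' j else w j

/-- Weak equality `F ∼ G` with respect to the pairs `(w_j, w_j')`, `j ∈ J`,
carrying exchange factors `H j`. -/
def WeakEq (J : Finset ℕ) (H : ℕ → ℂ → ℂ → ℂ) (w w' : ℕ → ℂ)
    (F G : (ℕ → ℂ) → (ℕ → ℂ) → ℂ) : Prop :=
  ∑ σ ∈ J.powerset, (∏ j ∈ σ, H j (w' j) (w j)) * F (swapOn σ w w') (swapOn σ w' w)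
    = ∑ σ ∈ J.powerset, (∏ j ∈ σ, H j (w' j) (w j)) * G (swapOn σ w w') (swapOn σ w' w)

/-- `b(z) = q(1−z)/(1−q²z)`. -/
noncomputable def bR (q z : ℂ) : ℂ := q * (1 - z) / (1 - q ^ 2 * z)

/-- `c(z) = (1−q²)/(1−q²z)`. -/
noncomputable def cR (q z : ℂ) : ℂ := (1 - q ^ 2) / (1 - q ^ 2 * z)

def Tb6 (q x x' y y' : ℂ) : ℂ := (q * y - x') * (y' - q * x)
def Tf6 (q x x' y y' : ℂ) : ℂ := (y - q * x') * (q * y' - x)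

def RB6 (q : ℂ) (G K : ℂ → ℂ → ℂ) : Prop := ∀ x x',
  (x - q ^ 2 * x') * G x x' - (1 - q ^ 2) * x * G x' x = q * (x - x') * K x' x
def RF6 (q : ℂ) (G K : ℂ → ℂ → ℂ) : Prop := ∀ x x',
  (q ^ 2 * x - x') * G x x' - (q ^ 2 - 1) * x * G x' x = -(q * (x - x') * K x' x)

theorem step_bb6 (q h y y' : ℂ) (G K : ℂ → ℂ → ℂ) (hR : RB6 q G K)
    (hD : q ^ 2 * y' - y ≠ 0) (hh : h * (q ^ 2 * y' - y) = -(q ^ 2 * y - y')) :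
    RB6 q (fun x x' => Tb6 q x x' y y' * G y y' + h * (Tb6 q x x' y' y * G y' y))
      (fun x x' => Tb6 q x x' y y' * K y y' + h * (Tb6 q x x' y' y * K y' y)) := by
  intro x x'
  by_cases hy : y = y'
  · subst hy
    have : h = -1 := mul_right_cancel₀ hD (by rw [hh]; ring)
    subst this
    ring
  · have r1 := hR y y'
    have r2 := hR y' y
    apply mul_left_cancel₀ (mul_ne_zero hD (sub_ne_zero.2 hy))
    simp only [Tb6]
    generalize G y y' = g at *
    generalize G y' y = g' at *
    generalize K y y' = k at *
    generalize K y' y = k' at *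
    linear_combination
      (y - y') * ((x - q^2*x') * ((q * y' - x') * (y - q * x)) * g'
      - (1 - q^2) * x * ((q * y' - x) * (y - q * x')) * g'
      - q * (x - x') * ((q * y' - x) * (y - q * x')) * k') * hh
      - (x - x') * ((q * y - x) * (y' - q * x')) * (q ^ 2 * y' - y) * r2
      - (x - x') * ((q * y' - x) * (y - q * x')) * (q ^ 2 * y - y') * r1

theorem step_fb6 (q y y' : ℂ) (G K : ℂ → ℂ → ℂ) (hR : RF6 q G K) :
    RB6 q (fun x x' => Tb6 q x x' y y' * G y y' + (-1) * (Tb6 q x x' y' y * G y' y))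
      (fun x x' => Tb6 q x x' y y' * K y y' + (-1) * (Tb6 q x x' y' y * K y' y)) := by
  intro x x'
  by_cases hy : y = y'
  · subst hy
    ring
  · have r1 := hR y y'
    have r2 := hR y' y
    apply mul_left_cancel₀ (sub_ne_zero.2 hy)
    simp only [Tb6]
    generalize G y y' = g at *
    generalize G y' y = g' at *
    generalize K y y' = k at *
    generalize K y' y = k' at *
    linear_combination
      (x - x') * ((q * y - x) * (y' - q * x')) * r2
      + (x - x') * ((q * y' - x) * (y - q * x')) * r1

theorem step_ff6 (q h y y' : ℂ) (G K : ℂ → ℂ → ℂ) (hR : RF6 q G K)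
    (hD : q ^ 2 * y - y' ≠ 0) (hh : h * (q ^ 2 * y - y') = -(q ^ 2 * y' - y)) :
    RF6 q (fun x x' => Tf6 q x x' y y' * G y y' + h * (Tf6 q x x' y' y * G y' y))
      (fun x x' => Tf6 q x x' y y' * K y y' + h * (Tf6 q x x' y' y * K y' y)) := by
  intro x x'
  by_cases hy : y = y'
  · subst hy
    have : h = -1 := mul_right_cancel₀ hD (by rw [hh]; ring)
    subst this
    ring
  · have r1 := hR y y'
    have r2 := hR y' y
    apply mul_left_cancel₀ (mul_ne_zero hD (sub_ne_zero.2 hy))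
    simp only [Tf6]
    generalize G y y' = g at *
    generalize G y' y = g' at *
    generalize K y y' = k at *
    generalize K y' y = k' at *
    linear_combination
      (y - y') * ((q^2*x - x') * ((y' - q * x') * (q * y - x)) * g'
      - (q^2 - 1) * x * ((y' - q * x) * (q * y - x')) * g'
      + q * (x - x') * ((y' - q * x) * (q * y - x')) * k') * hh
      - (x - x') * ((y - q * x) * (q * y' - x')) * (q ^ 2 * y - y') * r2
      - (x - x') * ((y' - q * x) * (q * y - x')) * (q ^ 2 * y' - y) * r1

/-- chain product -/
def P6 (T : ℕ → ℂ → ℂ → ℂ → ℂ → ℂ) (e : ℂ → ℂ → ℂ) (u u' : ℕ → ℂ) : ℕ → ℕ → ℂ → ℂ → ℂ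
  | 0, _, x, x' => e x x'
  | n + 1, k, x, x' => T k x x' (u (k + 1)) (u' (k + 1)) *
      P6 T e u u' n (k + 1) (u (k + 1)) (u' (k + 1))

/-- chain sum -/
def S6 (T : ℕ → ℂ → ℂ → ℂ → ℂ → ℂ) (e : ℂ → ℂ → ℂ) (h : ℕ → ℂ) (w w' : ℕ → ℂ) :
    ℕ → ℕ → ℂ → ℂ → ℂ
  | 0, _, x, x' => e x x'
  | n + 1, k, x, x' => T k x x' (w (k + 1)) (w' (k + 1)) *
      S6 T e h w w' n (k + 1) (w (k + 1)) (w' (k + 1)) +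
      h (k + 1) * (T k x x' (w' (k + 1)) (w (k + 1)) *
      S6 T e h w w' n (k + 1) (w' (k + 1)) (w (k + 1)))

theorem P6_congr (T e) (u u' v v' : ℕ → ℂ) (n : ℕ) : ∀ (k : ℕ) (x x' : ℂ),
    (∀ j, k < j → u j = v j ∧ u' j = v' j) →
    P6 T e u u' n k x x' = P6 T e v v' n k x x' := by
  induction n with
  | zero => intros; rfl
  | succ n ih =>
    intro k x x' H
    simp only [P6]
    rw [(H (k+1) (by omega)).1, (H (k+1) (by omega)).2,
      ih (k+1) _ _ (fun j hj => H j (by omega))]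

theorem P6_prod (T e) (u u' : ℕ → ℂ) (n : ℕ) : ∀ (k : ℕ),
    P6 T e u u' n k (u k) (u' k) =
      (∏ j ∈ Finset.Ico k (k + n), T j (u j) (u' j) (u (j+1)) (u' (j+1))) *
        e (u (k + n)) (u' (k + n)) := by
  induction n with
  | zero => intro k; simp [P6]
  | succ n ih =>
    intro k
    simp only [P6]
    rw [ih (k+1), Finset.prod_eq_prod_Ico_succ_bot (show k < k + (n+1) by omega),
      show k + 1 + n = k + (n+1) by omega]
    ring

theorem S6_sum (T e h) (w w' : ℕ → ℂ) (n : ℕ) : ∀ (k : ℕ) (x x' : ℂ),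
    ∑ σ ∈ (Finset.Ico (k+1) (k+1+n)).powerset, (∏ j ∈ σ, h j) *
      P6 T e (swapOn σ w w') (swapOn σ w' w) n k x x' = S6 T e h w w' n k x x' := by
  induction n with
  | zero => intro k x x'; simp [P6, S6]
  | succ n ih =>
    intro k x x'
    have hI : Finset.Ico (k+1) (k+1+(n+1)) = insert (k+1) (Finset.Ico (k+1+1) (k+1+1+n)) := by
      ext j; simp only [Finset.mem_Ico, Finset.mem_insert]; omega
    have hn : k + 1 ∉ Finset.Ico (k+1+1) (k+1+1+n) := by simp
    rw [hI, Finset.sum_powerset_insert hn]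
    simp only [S6]
    rw [← ih (k+1) (w (k+1)), ← ih (k+1) (w' (k+1)), Finset.mul_sum, Finset.mul_sum,
      Finset.mul_sum]
    congr 1
    · refine Finset.sum_congr rfl fun σ hσ => ?_
      have hk : k + 1 ∉ σ := fun hc => hn (Finset.mem_powerset.1 hσ hc)
      simp only [P6]
      have e1 : swapOn σ w w' (k+1) = w (k+1) := by simp [swapOn, hk]
      have e2 : swapOn σ w' w (k+1) = w' (k+1) := by simp [swapOn, hk]
      rw [e1, e2]; ring
    · refine Finset.sum_congr rfl fun σ hσ => ?_
      have hk : k + 1 ∉ σ := fun hc => hn (Finset.mem_powerset.1 hσ hc)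
      simp only [P6]
      have e1 : swapOn (insert (k+1) σ) w w' (k+1) = w' (k+1) := by simp [swapOn]
      have e2 : swapOn (insert (k+1) σ) w' w (k+1) = w (k+1) := by simp [swapOn]
      rw [e1, e2, Finset.prod_insert hk,
        P6_congr T e _ _ (swapOn σ w w') (swapOn σ w' w) n (k+1)]
      · ring
      · intro j hj
        have : j ≠ k + 1 := by omega
        simp [swapOn, this]

def T6 (M : ℕ) (q : ℂ) (j : ℕ) : ℂ → ℂ → ℂ → ℂ → ℂ := if j < M then Tb6 q else Tf6 q
def e6 (M μ : ℕ) (q z x _x' : ℂ) : ℂ := if μ ≤ M then z - q * x else q * z - x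
def d6 (M μ : ℕ) (q z _x x' : ℂ) : ℂ := if μ ≤ M then q * z - x' else -(z - q * x')

theorem S6_rel (M μ : ℕ) (q z : ℂ) (w w' : ℕ → ℂ)
    (hden : ∀ j ∈ Finset.Ico 1 μ,
      (j < M → q ^ 2 * w' j ≠ w j) ∧ (M < j → q ^ 2 * w j ≠ w' j)) (n : ℕ) :
    ∀ k, k + 1 + n = μ →
    (if k < M then RB6 q else RF6 q)
      (S6 (T6 M q) (e6 M μ q z) (fun j => Hex M q j (w' j) (w j)) w w' n k)
      (S6 (T6 M q) (d6 M μ q z) (fun j => Hex M q j (w' j) (w j)) w w' n k) := by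
  induction n with
  | zero =>
    intro k hk
    split_ifs with h
    · intro x x'
      simp only [S6, e6, d6, if_pos (show μ ≤ M by omega)]
      ring
    · intro x x'
      simp only [S6, e6, d6, if_neg (show ¬ μ ≤ M by omega)]
      ring
  | succ n ih =>
    intro k hk
    have IH := ih (k+1) (by omega)
    have hd := hden (k+1) (by simp; omega)
    rcases lt_trichotomy (k+1) M with h | h | h
    · rw [if_pos h] at IH
      rw [if_pos (by omega)]
      have hD := sub_ne_zero.2 (hd.1 h)
      have := step_bb6 q (Hex M q (k+1) (w' (k+1)) (w (k+1))) _ _ _ _ IH hD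
        (by simp only [Hex, if_pos h, Hb]; field_simp)
      intro x x'
      have t := this x x'
      simp only [S6, T6, if_pos (show k < M by omega)]
      exact t
    · rw [if_neg (by omega)] at IH
      rw [if_pos (by omega)]
      have := step_fb6 q (w (k+1)) (w' (k+1)) _ _ IH
      intro x x'
      have t := this x x'
      have hH : Hex M q (k+1) (w' (k+1)) (w (k+1)) = -1 := by simp [Hex, h]
      simp only [S6, T6, if_pos (show k < M by omega), hH]
      exact t
    · rw [if_neg (by omega)] at IH
      rw [if_neg (by omega)]
      have hD := sub_ne_zero.2 (hd.2 h)
      have := step_ff6 q (Hex M q (k+1) (w' (k+1)) (w (k+1))) _ _ _ _ IH hD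
        (by simp only [Hex, if_neg (show ¬ k+1 < M by omega), if_neg (show ¬ k+1 = M by omega), Hf]
            field_simp)
      intro x x'
      have t := this x x'
      simp only [S6, T6, if_neg (show ¬ k < M by omega)]
      exact t

/-- Proposition 6: `A_μ + B_μ + C_μ ∼ 0` with respect to the pairs
`(w₁, w₁'), …, (w_{μ−1}, w_{μ−1}')` carrying the `U_q(sl^(M|N))` exchange factors;
for `μ = 1` this is the plain identity `A₁ + B₁ + C₁ = 0`. -/
theorem proposition6 (M N : ℕ) (hM : 1 ≤ M) (hN : 1 ≤ N)
    (μ : ℕ) (hμ1 : 1 ≤ μ) (hμ2 : μ ≤ M + N - 1)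
    (q : ℂ) (hq : q ≠ 0) (hq2 : q ^ 2 ≠ 1) (w w' : ℕ → ℂ)
    (hw0 : w 0 ≠ 0) (hw0' : w 0 ≠ q ^ 2 * w' 0)
    (hden : ∀ j ∈ Finset.Ico 1 μ,
      (j < M → q ^ 2 * w' j ≠ w j) ∧ (M < j → q ^ 2 * w j ≠ w' j)) :
    WeakEq (Finset.Ico 1 μ) (Hex M q) w w'
      (fun u u' =>
        if μ = 1 then
          (u' 1 - q * u 0) + (-(bR q (u' 0 / u 0)) * (q * u' 1 - u 0)) +
            (-(cR q (u' 0 / u 0)) * (u' 1 - q * u' 0))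
        else if μ ≤ M then
          (∏ j ∈ Finset.range (μ - 1), (q * u (j + 1) - u' j) * (u' (j + 1) - q * u j)) *
              (u' μ - q * u (μ - 1)) +
            (-(bR q (u' 0 / u 0)) * ((q * u 1 - u 0) * (u' 1 - q * u' 0)) *
              (∏ j ∈ Finset.Ico 1 (μ - 1),
                (q * u (j + 1) - u' j) * (u' (j + 1) - q * u j)) *
              (q * u' μ - u' (μ - 1))) +
            (-(cR q (u' 0 / u 0)) * ((q * u 1 - u 0) * (u' 1 - q * u' 0)) *
              (∏ j ∈ Finset.Ico 1 (μ - 1),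
                (q * u (j + 1) - u' j) * (u' (j + 1) - q * u j)) *
              (u' μ - q * u (μ - 1)))
        else
          (∏ j ∈ Finset.range M, (q * u (j + 1) - u' j) * (u' (j + 1) - q * u j)) *
              (∏ j ∈ Finset.Ico M (μ - 1),
                (u (j + 1) - q * u' j) * (q * u' (j + 1) - u j)) *
              (q * u' μ - u (μ - 1)) +
            (bR q (u' 0 / u 0) * ((q * u 1 - u 0) * (u' 1 - q * u' 0)) *
              (∏ j ∈ Finset.Ico 1 M, (q * u (j + 1) - u' j) * (u' (j + 1) - q * u j)) *
              (∏ j ∈ Finset.Ico M (μ - 1),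
                (u (j + 1) - q * u' j) * (q * u' (j + 1) - u j)) *
              (u' μ - q * u' (μ - 1))) +
            (-(cR q (u' 0 / u 0)) * ((q * u 1 - u 0) * (u' 1 - q * u' 0)) *
              (∏ j ∈ Finset.Ico 1 M, (q * u (j + 1) - u' j) * (u' (j + 1) - q * u j)) *
              (∏ j ∈ Finset.Ico M (μ - 1),
                (u (j + 1) - q * u' j) * (q * u' (j + 1) - u j)) *
              (q * u' μ - u (μ - 1))))
      (fun _ _ => 0) := by
  unfold WeakEq
  simp only [mul_zero, Finset.sum_const_zero]
  obtain ⟨n, rfl⟩ : ∃ n, μ = n + 1 := ⟨μ - 1, by omega⟩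
  have hrel := S6_rel M (n+1) q (w' (n+1)) w w' hden n 0 (by omega)
  rw [if_pos (by omega)] at hrel
  have hr := hrel (w 0) (w' 0)
  have hsub : w 0 - q ^ 2 * w' 0 ≠ 0 := sub_ne_zero.2 hw0'
  have hb : bR q (w' 0 / w 0) = q * (w 0 - w' 0) / (w 0 - q ^ 2 * w' 0) := by
    unfold bR
    have : 1 - q ^ 2 * (w' 0 / w 0) = (w 0 - q ^ 2 * w' 0) / w 0 := by field_simp
    rw [this]; field_simp
  have hc : cR q (w' 0 / w 0) = (1 - q ^ 2) * w 0 / (w 0 - q ^ 2 * w' 0) := by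
    unfold cR
    have : 1 - q ^ 2 * (w' 0 / w 0) = (w 0 - q ^ 2 * w' 0) / w 0 := by field_simp
    rw [this]; field_simp
  have key : S6 (T6 M q) (e6 M (n+1) q (w' (n+1))) (fun j => Hex M q j (w' j) (w j)) w w' n 0
        (w 0) (w' 0)
      + -(bR q (w' 0 / w 0)) * S6 (T6 M q) (d6 M (n+1) q (w' (n+1)))
        (fun j => Hex M q j (w' j) (w j)) w w' n 0 (w' 0) (w 0)
      + -(cR q (w' 0 / w 0)) * S6 (T6 M q) (e6 M (n+1) q (w' (n+1)))
        (fun j => Hex M q j (w' j) (w j)) w w' n 0 (w' 0) (w 0) = 0 := by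
    rw [hb, hc]
    field_simp
    linear_combination hr
  rw [← S6_sum, ← S6_sum, ← S6_sum, Finset.mul_sum, Finset.mul_sum, ← Finset.sum_add_distrib,
    ← Finset.sum_add_distrib] at key
  rw [← key, show 0 + 1 + n = n + 1 by omega]
  refine Finset.sum_congr rfl fun σ hσ => ?_
  have hσ' := Finset.mem_powerset.1 hσ
  have h0 : 0 ∉ σ := fun hx => by simpa using hσ' hx
  have hm : n + 1 ∉ σ := fun hx => by simpa using hσ' hx
  have a0 : swapOn σ w w' 0 = w 0 := by simp [swapOn, h0]
  have a0' : swapOn σ w' w 0 = w' 0 := by simp [swapOn, h0]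
  have am : swapOn σ w' w (n+1) = w' (n+1) := by simp [swapOn, hm]
  rw [← a0, ← a0', ← am]
  generalize swapOn σ w w' = u
  generalize swapOn σ w' w = u'
  rcases n with _ | n
  · simp only [P6, e6, d6, if_pos (show 0 + 1 ≤ M by omega)]
    simp
    ring
  · simp only [P6]
    rw [P6_prod, P6_prod]
    simp only [show n + 1 + 1 - 1 = n + 1 by omega, show 0 + 1 + n = n + 1 by omega,
      if_neg (show ¬ n + 1 + 1 = 1 by omega), zero_add]
    have hT0 : T6 M q 0 = Tb6 q := by simp [T6]; omega
    by_cases hle : n + 1 + 1 ≤ M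
    · have hp : ∏ j ∈ Finset.Ico 1 (n+1), T6 M q j (u j) (u' j) (u (j+1)) (u' (j+1)) =
          ∏ j ∈ Finset.Ico 1 (n+1), (q * u (j + 1) - u' j) * (u' (j + 1) - q * u j) := by
        refine Finset.prod_congr rfl fun j hj => ?_
        have := Finset.mem_Ico.1 hj
        simp only [T6, if_pos (show j < M by omega), Tb6]
      rw [hp, hT0, Finset.range_eq_Ico, Finset.prod_eq_prod_Ico_succ_bot (show 0 < n + 1 by omega)]
      simp only [if_pos hle, e6, d6, Tb6, zero_add]
      ring
    · have hp : ∏ j ∈ Finset.Ico 1 (n+1), T6 M q j (u j) (u' j) (u (j+1)) (u' (j+1)) =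
          (∏ j ∈ Finset.Ico 1 M, (q * u (j + 1) - u' j) * (u' (j + 1) - q * u j)) *
          ∏ j ∈ Finset.Ico M (n+1), (u (j + 1) - q * u' j) * (q * u' (j + 1) - u j) := by
        rw [← Finset.prod_Ico_consecutive _ hM (show M ≤ n + 1 by omega)]
        congr 1
        · refine Finset.prod_congr rfl fun j hj => ?_
          have := Finset.mem_Ico.1 hj
          simp only [T6, if_pos (show j < M by omega), Tb6]
        · refine Finset.prod_congr rfl fun j hj => ?_
          have := Finset.mem_Ico.1 hj
          simp only [T6, if_neg (show ¬ j < M by omega), Tf6]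
      rw [if_neg hle, hp, hT0, Finset.range_eq_Ico, Finset.prod_eq_prod_Ico_succ_bot (show 0 < M by omega)]
      simp only [if_neg hle, e6, d6, Tb6, zero_add]
      ring
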